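/- Let μ_N = (1/N) Σ_{n=0}^{N−1} Q^n(0, ·) be the Cesàro averages of the transition probabilities started from the point 0 of the circle. Then the sequence (μ_N) has at least one weak limit point, and every weak limit point μ is a Q-invariant probability measure which satisfies μ(A⁰) = 1, where A⁰ ⊂ 𝕋 is the countable set of points represented by triadic rationals, A⁰ = { j·3^{−n} mod 1 : n ∈ ℕ, 0 ≤ j < 3^n } (equivalently, points of [0,1) all but finitely many of whose ternary digits are 0). -/

import Mathlib

open MeasureTheory
open scoped ENNReal

/-- The representative in `[0,1)` of a point of the unit circle `𝕋 = ℝ/ℤ`. -/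
noncomputable def circleRep (z : UnitAddCircle) : ℝ :=
  ((AddCircle.equivIco 1 0 z : Set.Ico (0 : ℝ) (0 + 1)) : ℝ)

/-- The Markov kernel `Q(z,·) = (1−3p)·δ_{3z} + p·(δ_{z̄/3} + δ_{(z̄+1)/3} + δ_{(z̄+2)/3})`
on the circle, arithmetic taken modulo 1. -/
noncomputable def Qkern (p : ℝ) (z : UnitAddCircle) : Measure UnitAddCircle :=
  ENNReal.ofReal (1 - 3 * p) • Measure.dirac (((3 * circleRep z : ℝ) : UnitAddCircle))
    + ENNReal.ofReal p •
      (Measure.dirac (((circleRep z / 3 : ℝ) : UnitAddCircle))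
        + Measure.dirac ((((circleRep z + 1) / 3 : ℝ) : UnitAddCircle))
        + Measure.dirac ((((circleRep z + 2) / 3 : ℝ) : UnitAddCircle)))

/-- The `n`-step transition kernel `Q^n`. -/
noncomputable def Qiter (p : ℝ) : ℕ → UnitAddCircle → Measure UnitAddCircle
  | 0, z => Measure.dirac z
  | n + 1, z => (Qiter p n z).bind (Qkern p)

/-- The set `A⁰` of triadic-rational points of the circle. -/
def triadicPoints : Set UnitAddCircle :=
  {z : UnitAddCircle | ∃ n j : ℕ, j < 3 ^ n ∧ z = (((j : ℝ) / 3 ^ n : ℝ) : UnitAddCircle)}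

/-!
The circle is compact and `Q` is Feller: although the three inverse branches of `z ↦ 3z` jump at
`0`, the jump only permutes them. Hence every limit point of the Cesàro averages is invariant, by
the Krylov–Bogoliubov argument.

Let the depth of `z` be the least `d` with `3 ^ d • z = 0`. Tripling lowers a positive depth by one
and each inverse branch raises it by at most one, so along the chain started at `0` the depth is
dominated by a birth-and-death chain which goes up with probability `3p` and down with probability
`1 - 3p`. For `p < 1/6` its drift is negative, which bounds the tails of the depth by
`(3p / (1 - 3p)) ^ m` at all times. As `{depth ≥ m}` is open, these bounds survive in weak limits,
so that in the limit almost every point has finite depth, i.e. is triadic.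
-/

open ProbabilityTheory Filter Topology
open scoped BoundedContinuousFunction

section FellerKernel

variable {X Y : Type*} [MeasurableSpace X] [TopologicalSpace X] [MeasurableSpace Y]
  [TopologicalSpace Y]

/-- The Feller property: the kernel maps bounded continuous functions to continuous functions. -/
def IsFeller (κ : Kernel X Y) : Prop :=
  ∀ f : Y →ᵇ ℝ, Continuous fun x => ∫ y, f y ∂κ x

/-- The action `f ↦ κ f` of a Feller Markov kernel on bounded continuous functions. -/
noncomputable def IsFeller.action {κ : Kernel X Y} [IsMarkovKernel κ] (hκ : IsFeller κ)
    (f : Y →ᵇ ℝ) : X →ᵇ ℝ :=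
  BoundedContinuousFunction.ofNormedAddCommGroup (fun x => ∫ y, f y ∂κ x) (hκ f) ‖f‖ fun x => by
    simpa using norm_integral_le_of_norm_le_const (μ := κ x) (ae_of_all _ f.norm_coe_le_norm)

lemma IsFeller.integral_comp [OpensMeasurableSpace Y] {κ : Kernel X Y} [IsMarkovKernel κ]
    (hκ : IsFeller κ) (μ : Measure X) [IsProbabilityMeasure μ] (f : Y →ᵇ ℝ) :
    ∫ y, f y ∂(κ ∘ₘ μ) = ∫ x, hκ.action f x ∂μ := by
  rw [Measure.comp_eq_comp_const_apply, Kernel.integral_comp (f.integrable _), Kernel.const_apply]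
  rfl

end FellerKernel

section CesaroMean

variable {X : Type*} [MeasurableSpace X]

/-- The average of the first `N + 1` terms of a sequence of measures; the shift by one makes it
meaningful for every `N`. -/
noncomputable def cesaroMean (ν : ℕ → Measure X) (N : ℕ) : Measure X :=
  ((N : ℝ≥0∞) + 1)⁻¹ • ∑ n ∈ Finset.range (N + 1), ν n

lemma cesaroMean_apply_le {ν : ℕ → Measure X} {s : Set X} {c : ℝ≥0∞} (h : ∀ n, ν n s ≤ c)
    (N : ℕ) : cesaroMean ν N s ≤ c := by
  rw [cesaroMean, Measure.smul_apply, Measure.finsetSum_apply, smul_eq_mul]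
  calc ((N : ℝ≥0∞) + 1)⁻¹ * ∑ n ∈ Finset.range (N + 1), ν n s
      ≤ ((N : ℝ≥0∞) + 1)⁻¹ * ((N + 1) * c) := by
        gcongr
        simpa using Finset.sum_le_card_nsmul (Finset.range (N + 1)) _ c fun n _ => h n
    _ = c := by rw [← mul_assoc, ENNReal.inv_mul_cancel (by simp) (by simp), one_mul]

lemma integral_cesaroMean {ν : ℕ → Measure X} {f : X → ℝ} (hf : ∀ n, Integrable f (ν n)) (N : ℕ) :
    ∫ x, f x ∂cesaroMean ν N = ((N : ℝ) + 1)⁻¹ * ∑ n ∈ Finset.range (N + 1), ∫ x, f x ∂ν n := by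
  rw [cesaroMean, integral_smul_measure, integral_finsetSum_measure fun n _ => hf n, smul_eq_mul,
    ENNReal.toReal_inv, ENNReal.toReal_add (by simp) (by simp), ENNReal.toReal_natCast,
    ENNReal.toReal_one]

variable [TopologicalSpace X]

lemma tendsto_integral_cesaroMean_succ_sub [OpensMeasurableSpace X] {ν : ℕ → Measure X}
    [∀ n, IsProbabilityMeasure (ν n)] (f : X →ᵇ ℝ) :
    Tendsto (fun N => ∫ x, f x ∂cesaroMean (fun n => ν (n + 1)) N - ∫ x, f x ∂cesaroMean ν N)
      atTop (𝓝 0) := by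
  have telescope (N : ℕ) :
      ∫ x, f x ∂cesaroMean (fun n => ν (n + 1)) N - ∫ x, f x ∂cesaroMean ν N
        = 1 / ((N : ℝ) + 1) * (∫ x, f x ∂ν (N + 1) - ∫ x, f x ∂ν 0) := by
    rw [integral_cesaroMean (fun n => f.integrable (ν (n + 1))),
      integral_cesaroMean (fun n => f.integrable (ν n)), ← mul_sub, ← Finset.sum_sub_distrib,
      Finset.sum_range_sub (fun n => ∫ x, f x ∂ν n), one_div]
  have bounded (N : ℕ) : ‖∫ x, f x ∂ν (N + 1) - ∫ x, f x ∂ν 0‖ ≤ ‖f‖ + ‖f‖ :=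
    norm_sub_le_of_le (f.norm_integral_le_norm (ν (N + 1))) (f.norm_integral_le_norm (ν 0))
  simp only [telescope]
  exact tendsto_one_div_add_atTop_nhds_zero_nat.zero_mul_isBoundedUnder_le
    (isBoundedUnder_of ⟨_, bounded⟩)

theorem invariant_of_mapClusterPt_cesaroMean [HasOuterApproxClosed X] [BorelSpace X]
    {κ : Kernel X X} [IsMarkovKernel κ] (hκ : IsFeller κ)
    {ν : ℕ → Measure X} [∀ n, IsProbabilityMeasure (ν n)] (hν : ∀ n, ν (n + 1) = κ ∘ₘ ν n)
    {μN : ℕ → ProbabilityMeasure X} (hμN : ∀ N, (μN N : Measure X) = cesaroMean ν N)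
    {μ : ProbabilityMeasure X} (hμ : MapClusterPt μ atTop μN) : κ.Invariant (μ : Measure X) := by
  obtain ⟨U, hU, hlim⟩ := mapClusterPt_iff_ultrafilter.1 hμ
  rw [Kernel.Invariant]
  refine ext_of_forall_integral_eq_of_IsFiniteMeasure fun f => ?_
  have push (N : ℕ) : ∫ x, hκ.action f x ∂(μN N : Measure X)
      = ∫ x, f x ∂cesaroMean (fun n => ν (n + 1)) N := by
    rw [hμN, integral_cesaroMean fun n => (hκ.action f).integrable (ν n),
      integral_cesaroMean fun n => f.integrable (ν (n + 1))]
    simp only [hν, hκ.integral_comp]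
  have diff_tendsto := (ProbabilityMeasure.tendsto_iff_forall_integral_tendsto.1 hlim
    (hκ.action f)).sub (ProbabilityMeasure.tendsto_iff_forall_integral_tendsto.1 hlim f)
  simp only [push] at diff_tendsto
  simp only [hμN] at diff_tendsto
  rw [hκ.integral_comp]
  exact sub_eq_zero.1 (tendsto_nhds_unique diff_tendsto
    ((tendsto_integral_cesaroMean_succ_sub f).mono_left hU))

lemma measure_le_of_mapClusterPt_of_isOpen [HasOuterApproxClosed X] [OpensMeasurableSpace X]
    {ι : Type*} {L : Filter ι} {ν : ι → ProbabilityMeasure X} {μ : ProbabilityMeasure X}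
    (hμ : MapClusterPt μ L ν) {s : Set X} (hs : IsOpen s) {c : ℝ≥0∞}
    (h : ∀ᶠ i in L, (ν i : Measure X) s ≤ c) : (μ : Measure X) s ≤ c := by
  obtain ⟨U, hU, hlim⟩ := mapClusterPt_iff_ultrafilter.1 hμ
  exact (ProbabilityMeasure.le_liminf_measure_open_of_tendsto hlim hs).trans
    (liminf_le_of_frequently_le' (h.filter_mono hU).frequently)

end CesaroMean

section GeometricTail

variable {X : Type*} [MeasurableSpace X]

/-- With `V m = {h ≥ m}`, `hκ` says that the height `h` is dominated by a birth-and-death chain with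
up-weight `b` and down-weight `a`, and `hr` that the geometric tail `r ^ m` is a supersolution of
the resulting recursion. -/
lemma comp_apply_le_pow {κ : Kernel X X} [IsMarkovKernel κ] {V : ℕ → Set X}
    (hV : ∀ m, MeasurableSet (V m)) {a b r : ℝ≥0∞} (hr : a * r ^ 2 + b ≤ r)
    (hκ : ∀ m z, κ z (V (m + 1)) ≤ a * (V (m + 2)).indicator 1 z + b * (V m).indicator 1 z)
    {μ : Measure X} [IsProbabilityMeasure μ] (hμ : ∀ m, μ (V m) ≤ r ^ m) :
    ∀ m, (κ ∘ₘ μ) (V m) ≤ r ^ m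
  | 0 => prob_le_one.trans_eq (pow_zero r).symm
  | m + 1 => by
    have measurable_ind (k : ℕ) : Measurable ((V k).indicator (1 : X → ℝ≥0∞)) :=
      measurable_one.indicator (hV k)
    calc (κ ∘ₘ μ) (V (m + 1)) = ∫⁻ z, κ z (V (m + 1)) ∂μ :=
          Measure.bind_apply (hV _) κ.aemeasurable
      _ ≤ ∫⁻ z, (a * (V (m + 2)).indicator 1 z + b * (V m).indicator 1 z) ∂μ :=
          lintegral_mono (hκ m)
      _ = a * μ (V (m + 2)) + b * μ (V m) := by
          rw [lintegral_add_left ((measurable_ind _).const_mul _),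
            lintegral_const_mul _ (measurable_ind _), lintegral_const_mul _ (measurable_ind _),
            lintegral_indicator_one (hV _), lintegral_indicator_one (hV _)]
      _ ≤ a * r ^ (m + 2) + b * r ^ m := by gcongr <;> apply hμ
      _ = (a * r ^ 2 + b) * r ^ m := by ring
      _ ≤ r ^ (m + 1) := (mul_le_mul_left hr _).trans_eq (pow_succ' r m).symm

lemma measure_iInter_eq_zero_of_le_pow {μ : Measure X} {V : ℕ → Set X} {r : ℝ≥0∞} (hr : r < 1)
    (h : ∀ m, μ (V m) ≤ r ^ m) : μ (⋂ m, V m) = 0 :=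
  le_zero_iff.1 <| ge_of_tendsto' (ENNReal.tendsto_pow_atTop_nhds_zero_of_lt_one hr) fun m =>
    (measure_mono (Set.iInter_subset V m)).trans (h m)

end GeometricTail

section TorsionDepth

variable {G : Type*} [AddMonoid G]

/-- The elements `z` of depth at least `m`, where the depth of `z` is the least `d` with
`b ^ d • z = 0`, or infinity if `z` is not `b`-power torsion. -/
def torsionDepthGE (b m : ℕ) : Set G := {z | ∀ k < m, b ^ k • z ≠ 0}

lemma mem_torsionDepthGE_succ {b m : ℕ} {z : G} :
    z ∈ torsionDepthGE b (m + 1) ↔ z ≠ 0 ∧ b • z ∈ torsionDepthGE b m := by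
  simp only [torsionDepthGE, Set.mem_ofPred_eq, Nat.forall_lt_succ_left, pow_zero, one_nsmul,
    pow_succ', mul_nsmul]

lemma torsionDepthGE_succ (b m : ℕ) :
    (torsionDepthGE b (m + 1) : Set G) = {0}ᶜ ∩ (b • ·) ⁻¹' torsionDepthGE b m :=
  Set.ext fun _ => mem_torsionDepthGE_succ

lemma mem_torsionDepthGE_of_nsmul_mem {b m : ℕ} {z : G}
    (h : b • z ∈ torsionDepthGE b (m + 1)) : z ∈ torsionDepthGE b (m + 2) := by
  refine mem_torsionDepthGE_succ.2 ⟨fun hz => ?_, h⟩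
  exact (mem_torsionDepthGE_succ.1 h).1 (by rw [hz, nsmul_zero])

lemma isOpen_torsionDepthGE [TopologicalSpace G] [T1Space G] [ContinuousAdd G] (b m : ℕ) :
    IsOpen (torsionDepthGE b m : Set G) := by
  induction m with
  | zero => simp [torsionDepthGE]
  | succ m ih =>
    rw [torsionDepthGE_succ]
    exact isOpen_compl_singleton.inter (ih.preimage (continuous_nsmul b))

lemma dirac_zero_torsionDepthGE_le_pow [MeasurableSpace G] {b m : ℕ}
    (hm : MeasurableSet (torsionDepthGE b m : Set G)) (r : ℝ≥0∞) :
    Measure.dirac (0 : G) (torsionDepthGE b m) ≤ r ^ m := by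
  rw [Measure.dirac_apply' _ hm]
  cases m with
  | zero => simp [torsionDepthGE]
  | succ m => simp [mem_torsionDepthGE_succ]

end TorsionDepth

section TriadicPoints

lemma compl_triadicPoints : triadicPointsᶜ = ⋂ m, torsionDepthGE 3 m := by
  have mem_iff (z : UnitAddCircle) : z ∈ triadicPoints ↔ ∃ n, 3 ^ n • z = 0 := by
    simp [triadicPoints, AddCircle.nsmul_eq_zero_iff, eq_comm]
  ext z
  simp only [Set.mem_compl_iff, mem_iff, not_exists, Set.mem_iInter, torsionDepthGE,
    Set.mem_ofPred_eq]
  exact ⟨fun h m k _ => h k, fun h n => h (n + 1) n n.lt_succ_self⟩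

lemma measurableSet_triadicPoints : MeasurableSet triadicPoints := by
  rw [← MeasurableSet.compl_iff, compl_triadicPoints]
  exact .iInter fun m => (isOpen_torsionDepthGE 3 m).measurableSet

end TriadicPoints

section InverseBranch

/-- The `k`-th inverse branch `z ↦ (z̄ + k) / b` of multiplication by `b` on the circle. -/
noncomputable def inverseBranch (b k : ℕ) (z : UnitAddCircle) : UnitAddCircle :=
  ((circleRep z + k) / b : ℝ)

lemma coe_circleRep (z : UnitAddCircle) : (circleRep z : UnitAddCircle) = z :=
  AddCircle.coe_equivIco

lemma measurable_circleRep : Measurable circleRep :=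
  measurable_subtype_coe.comp (AddCircle.measurableEquivIco 1 0).measurable

lemma continuous_comp_circleRep {E : Type*} [TopologicalSpace E] {F : ℝ → E} (hF : Continuous F)
    (h01 : F 0 = F 1) : Continuous fun z => F (circleRep z) :=
  AddCircle.liftIco_zero_continuous h01 hF.continuousOn

lemma measurable_inverseBranch (b k : ℕ) : Measurable (inverseBranch b k) :=
  AddCircle.measurable_mk'.comp ((measurable_circleRep.add_const _).div_const _)

lemma nsmul_inverseBranch {b : ℕ} (hb : b ≠ 0) (k : ℕ) (z : UnitAddCircle) :
    b • inverseBranch b k z = z := by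
  have hb' : (b : ℝ) ≠ 0 := Nat.cast_ne_zero.2 hb
  rw [inverseBranch, ← AddCircle.coe_nsmul, nsmul_eq_mul, mul_div_cancel₀ _ hb', AddCircle.coe_add,
    coe_circleRep, ← nsmul_one k, AddCircle.coe_nsmul, AddCircle.coe_period, nsmul_zero, add_zero]

/-- As `z` winds once around the circle each branch moves on to the next one, so that only the sum
over all of them closes up. -/
lemma continuous_sum_comp_inverseBranch {E : Type*} [AddCommGroup E] [TopologicalSpace E]
    [ContinuousAdd E] {f : UnitAddCircle → E} (hf : Continuous f) (b : ℕ) :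
    Continuous fun z => ∑ k ∈ Finset.range b, f (inverseBranch b k z) := by
  obtain rfl | hb := eq_or_ne b 0
  · simpa using continuous_const
  let F (x : ℝ) : E := ∑ k ∈ Finset.range b, f ((x + k) / b : ℝ)
  have hF : Continuous F := by
    have := AddCircle.continuous_mk' (1 : ℝ)
    fun_prop
  refine continuous_comp_circleRep hF (sub_eq_zero.1 ?_).symm
  have h := Finset.sum_range_sub (fun k : ℕ => f ((k / b : ℝ) : UnitAddCircle)) b
  simpa [F, hb, add_comm, AddCircle.coe_period] using h

end InverseBranch

section TripleKernel

variable {p : ℝ}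

lemma Qkern_eq (p : ℝ) (z : UnitAddCircle) :
    Qkern p z = ENNReal.ofReal (1 - 3 * p) • Measure.dirac (3 • z)
      + ENNReal.ofReal p • ∑ k ∈ Finset.range 3, Measure.dirac (inverseBranch 3 k z) := by
  have three_nsmul : ((3 * circleRep z : ℝ) : UnitAddCircle) = 3 • z := by
    rw [← coe_circleRep z, ← AddCircle.coe_nsmul, coe_circleRep, nsmul_eq_mul, Nat.cast_ofNat]
  simp [Qkern, three_nsmul, Finset.sum_range_succ, inverseBranch]

lemma Qkern_apply (p : ℝ) (z : UnitAddCircle) {s : Set UnitAddCircle} (hs : MeasurableSet s) :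
    Qkern p z s = ENNReal.ofReal (1 - 3 * p) * s.indicator 1 (3 • z)
      + ENNReal.ofReal p * ∑ k ∈ Finset.range 3, s.indicator 1 (inverseBranch 3 k z) := by
  simp [Qkern_eq, Measure.dirac_apply' _ hs]

lemma measurable_Qkern (p : ℝ) : Measurable (Qkern p) := by
  refine Measure.measurable_of_measurable_coe _ fun s hs => ?_
  have : Measurable (s.indicator (1 : UnitAddCircle → ℝ≥0∞)) := measurable_one.indicator hs
  have := measurable_inverseBranch 3
  simp only [Qkern_apply _ _ hs]
  fun_prop

/-- `Qkern p` bundled as a kernel. -/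
noncomputable def Qkernel (p : ℝ) : Kernel UnitAddCircle UnitAddCircle :=
  ⟨Qkern p, measurable_Qkern p⟩

lemma isMarkovKernel_Qkernel (hp : 0 ≤ p) (hp3 : 3 * p ≤ 1) : IsMarkovKernel (Qkernel p) := by
  refine ⟨fun z => ⟨?_⟩⟩
  calc Qkern p z Set.univ = ENNReal.ofReal (1 - 3 * p) + ENNReal.ofReal p * ENNReal.ofReal 3 := by
        simp [Qkern_apply]
    _ = 1 := by
        rw [← ENNReal.ofReal_mul hp, ← ENNReal.ofReal_add (by linarith) (by linarith),
          mul_comm p, sub_add_cancel, ENNReal.ofReal_one]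

lemma isFeller_Qkernel (p : ℝ) : IsFeller (Qkernel p) := by
  intro f
  have integral_eq (z : UnitAddCircle) : ∫ x, f x ∂Qkern p z
      = (ENNReal.ofReal (1 - 3 * p)).toReal * f (3 • z)
        + (ENNReal.ofReal p).toReal * ∑ k ∈ Finset.range 3, f (inverseBranch 3 k z) := by
    rw [Qkern_eq, integral_add_measure ((f.integrable _).smul_measure ENNReal.ofReal_ne_top)
      ((f.integrable _).smul_measure ENNReal.ofReal_ne_top), integral_smul_measure,
      integral_smul_measure, integral_finsetSum_measure fun _ _ => f.integrable _]
    simp only [integral_dirac, smul_eq_mul]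
  exact ((continuous_const.mul (f.continuous.comp (continuous_nsmul 3))).add
    (continuous_const.mul (continuous_sum_comp_inverseBranch f.continuous 3))).congr
      fun z => (integral_eq z).symm

lemma Qkern_torsionDepthGE_succ_le (p : ℝ) (m : ℕ) (z : UnitAddCircle) :
    Qkern p z (torsionDepthGE 3 (m + 1))
      ≤ ENNReal.ofReal (1 - 3 * p) * (torsionDepthGE 3 (m + 2)).indicator 1 z
        + ENNReal.ofReal (3 * p) * (torsionDepthGE 3 m).indicator 1 z := by
  have indicator_le {s t : Set UnitAddCircle} {g : UnitAddCircle → UnitAddCircle}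
      (h : ∀ w, g w ∈ s → w ∈ t) : s.indicator (1 : UnitAddCircle → ℝ≥0∞) (g z) ≤ t.indicator 1 z :=
    Set.indicator_le_indicator_of_subset (s := g ⁻¹' s) (f := 1) h (fun _ => zero_le) z
  have branch_le (k : ℕ) : (torsionDepthGE 3 (m + 1)).indicator (1 : UnitAddCircle → ℝ≥0∞)
      (inverseBranch 3 k z) ≤ (torsionDepthGE 3 m).indicator 1 z := by
    refine indicator_le fun w hw => ?_
    simpa only [nsmul_inverseBranch three_ne_zero] using (mem_torsionDepthGE_succ.1 hw).2
  calc Qkern p z (torsionDepthGE 3 (m + 1))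
      = ENNReal.ofReal (1 - 3 * p) * (torsionDepthGE 3 (m + 1)).indicator 1 (3 • z)
        + ENNReal.ofReal p * ∑ k ∈ Finset.range 3,
          (torsionDepthGE 3 (m + 1)).indicator 1 (inverseBranch 3 k z) :=
        Qkern_apply p z (isOpen_torsionDepthGE 3 _).measurableSet
    _ ≤ ENNReal.ofReal (1 - 3 * p) * (torsionDepthGE 3 (m + 2)).indicator 1 z
        + ENNReal.ofReal p * (3 * (torsionDepthGE 3 m).indicator 1 z) := by
        gcongr
        · exact indicator_le fun _ => mem_torsionDepthGE_of_nsmul_mem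
        · simpa using Finset.sum_le_card_nsmul (Finset.range 3) _ _ fun k _ => branch_le k
    _ = _ := by
        rw [ENNReal.ofReal_mul zero_le_three, ENNReal.ofReal_ofNat]
        ring

lemma isProbabilityMeasure_Qiter (hp : 0 ≤ p) (hp3 : 3 * p ≤ 1) (n : ℕ) (z : UnitAddCircle) :
    IsProbabilityMeasure (Qiter p n z) := by
  have := isMarkovKernel_Qkernel hp hp3
  induction n with
  | zero => exact Measure.dirac.isProbabilityMeasure
  | succ n ih => exact inferInstanceAs (IsProbabilityMeasure (Qkernel p ∘ₘ Qiter p n z))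

lemma Qiter_zero_torsionDepthGE_le (hp : 0 ≤ p) (hp3 : 3 * p < 1) (n m : ℕ) :
    Qiter p n 0 (torsionDepthGE 3 m) ≤ ENNReal.ofReal (3 * p / (1 - 3 * p)) ^ m := by
  have measurableSet_depth (m : ℕ) : MeasurableSet (torsionDepthGE 3 m : Set UnitAddCircle) :=
    (isOpen_torsionDepthGE 3 m).measurableSet
  have hq : 0 < 1 - 3 * p := sub_pos.2 hp3
  have ratio_eq : ENNReal.ofReal (1 - 3 * p) * ENNReal.ofReal (3 * p / (1 - 3 * p)) ^ 2
      + ENNReal.ofReal (3 * p) = ENNReal.ofReal (3 * p / (1 - 3 * p)) := by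
    rw [← ENNReal.ofReal_pow (by positivity), ← ENNReal.ofReal_mul hq.le,
      ← ENNReal.ofReal_add (by positivity) (by positivity)]
    congr 1
    field_simp
    ring
  have := isMarkovKernel_Qkernel hp hp3.le
  induction n generalizing m with
  | zero => exact dirac_zero_torsionDepthGE_le_pow (measurableSet_depth m) _
  | succ n ih =>
    have := isProbabilityMeasure_Qiter hp hp3.le n 0
    exact comp_apply_le_pow (κ := Qkernel p) measurableSet_depth ratio_eq.le
      (Qkern_torsionDepthGE_succ_le p) ih m

end TripleKernel

/-- Example 5.3: the Cesàro (Khasminskii) averages `μ_N = N^{-1} Σ_{n<N} Q^n(0,·)` have at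
least one weak limit point, and every weak limit point is a `Q`-invariant probability
measure giving full mass to the set `A⁰` of triadic points. -/
theorem Qiter_cesaro_limit_invariant (p : ℝ) (hp : 0 < p) (hp6 : p < 1 / 6)
    (μN : ℕ → ProbabilityMeasure UnitAddCircle)
    (hμN : ∀ N : ℕ, (μN N : Measure UnitAddCircle)
      = (((N : ℝ≥0∞) + 1))⁻¹ •
          ∑ n ∈ Finset.range (N + 1), Qiter p n (((0 : ℝ) : UnitAddCircle))) :
    (∃ μ : ProbabilityMeasure UnitAddCircle, MapClusterPt μ Filter.atTop μN) ∧
    ∀ μ : ProbabilityMeasure UnitAddCircle, MapClusterPt μ Filter.atTop μN →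
      (μ : Measure UnitAddCircle).bind (Qkern p) = (μ : Measure UnitAddCircle) ∧
      (μ : Measure UnitAddCircle) triadicPoints = 1 := by
  have hp3 : 3 * p < 1 := by linarith
  have ratio_lt_one : 3 * p / (1 - 3 * p) < 1 := (div_lt_one (by linarith)).2 (by linarith)
  have := isMarkovKernel_Qkernel hp.le hp3.le
  have := fun n => isProbabilityMeasure_Qiter hp.le hp3.le n 0
  refine ⟨exists_clusterPt_of_compactSpace _, fun μ hμ => ⟨?_, ?_⟩⟩
  · exact invariant_of_mapClusterPt_cesaroMean (isFeller_Qkernel p) (fun _ => rfl) hμN hμ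
  · have tail_le (m : ℕ) : (μ : Measure UnitAddCircle) (torsionDepthGE 3 m)
        ≤ ENNReal.ofReal (3 * p / (1 - 3 * p)) ^ m :=
      measure_le_of_mapClusterPt_of_isOpen hμ (isOpen_torsionDepthGE 3 m) <| .of_forall fun N =>
        (hμN N).symm ▸ cesaroMean_apply_le (fun n => Qiter_zero_torsionDepthGE_le hp.le hp3 n m) N
    rw [← prob_compl_eq_zero_iff measurableSet_triadicPoints, compl_triadicPoints]
    exact measure_iInter_eq_zero_of_le_pow (ENNReal.ofReal_lt_one.2 ratio_lt_one) tail_le
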